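/- arXiv:2102.03855 — 2 statements merged into one kernel-verified Lean document; each statement's English description precedes it below -/
import Mathlib

section
/- For every integer n ≥ 9, ρ(L_{n,2}) > ρ(Γ_{n,3}), where ρ denotes the spectral radius. -/
open SimpleGraph

/-- `G` contains a cycle of length `l`. -/
def HasCycleLen {V : Type} (G : SimpleGraph V) (l : ℕ) : Prop :=
  ∃ (v : V) (c : G.Walk v v), c.IsCycle ∧ c.length = l

/-- The circumference of `G`: the length of a longest cycle. -/
noncomputable def circumference {V : Type} (G : SimpleGraph V) : ℕ :=
  sSup {l | HasCycleLen G l}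

/-- `G` is weakly pancyclic with girth 3: it contains a cycle of every length `l`
with `3 ≤ l ≤ c(G)`. -/
def WeaklyPancyclic3 {V : Type} (G : SimpleGraph V) : Prop :=
  HasCycleLen G 3 ∧ ∀ l : ℕ, 3 ≤ l → l ≤ circumference G → HasCycleLen G l

/-- The number of edges of `G`. -/
noncomputable def edgeCount {V : Type} (G : SimpleGraph V) : ℕ :=
  Nat.card G.edgeSet

/-- The degree of `v` in `G`. -/
noncomputable def degCount {V : Type} (G : SimpleGraph V) (v : V) : ℕ :=
  Nat.card (G.neighborSet v)

/-- The spectral radius of `G`: the largest eigenvalue of the adjacency matrix. -/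
noncomputable def specRad {V : Type} [Finite V] (G : SimpleGraph V) : ℝ :=
  letI := Fintype.ofFinite V
  letI := Classical.decEq V
  letI := Classical.decRel G.Adj
  sSup (spectrum ℝ (G.adjMatrix ℝ))

/-- The signless Laplacian spectral radius of `G`: the largest eigenvalue of `D(G) + A(G)`. -/
noncomputable def qSpecRad {V : Type} [Finite V] (G : SimpleGraph V) : ℝ :=
  letI := Fintype.ofFinite V
  letI := Classical.decEq V
  letI := Classical.decRel G.Adj
  sSup (spectrum ℝ (Matrix.diagonal (fun v => (degCount G v : ℝ)) + G.adjMatrix ℝ))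

/-- `L_{n,k} = K_1 ∨ (K_{n-k-1} + K_k)`: vertex `0` is the common vertex of a clique on
the `n - k` vertices `{0, …, n-k-1}` and a clique on the `k+1` vertices `{0} ∪ {n-k, …, n-1}`. -/
def Lgraph (n k : ℕ) : SimpleGraph (Fin n) :=
  SimpleGraph.fromRel (fun u v =>
    u.val = 0 ∨ v.val = 0 ∨ (u.val < n - k ∧ v.val < n - k) ∨
      (n - k ≤ u.val ∧ n - k ≤ v.val))

/-- `Γ_{n,t} = K_2 ∨ (K_{n-2-t} + t·K_1)`: vertices `0,1` are joined to everything,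
vertices `2, …, n-t-1` form a clique, and vertices `n-t, …, n-1` are independent. -/
def GammaGraph (n t : ℕ) : SimpleGraph (Fin n) :=
  SimpleGraph.fromRel (fun u v =>
    u.val < 2 ∨ v.val < 2 ∨ (u.val < n - t ∧ v.val < n - t))

/-- `F` is a member of the family `F_{n,k}`: there is a clique `K` on `n - k` vertices
such that each connected component of `F - K` is a clique all of whose vertices are
adjacent to one single common vertex of `K` and to no other vertex of `K`. -/
def MemF (n k : ℕ) (F : SimpleGraph (Fin n)) : Prop :=
  ∃ K : Finset (Fin n), K.card = n - k ∧ F.IsClique (↑K : Set (Fin n)) ∧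
    (∀ u v : ({x : Fin n | x ∉ K} : Set (Fin n)),
      (F.induce {x : Fin n | x ∉ K}).Reachable u v → (u = v ∨ F.Adj u.1 v.1)) ∧
    (∀ u : ({x : Fin n | x ∉ K} : Set (Fin n)), ∃! w : Fin n, w ∈ K ∧ F.Adj u.1 w) ∧
    (∀ u v : ({x : Fin n | x ∉ K} : Set (Fin n)),
      (F.induce {x : Fin n | x ∉ K}).Reachable u v →
        ∀ w ∈ K, F.Adj u.1 w → F.Adj v.1 w)

/-- `G` is a subgraph of `H` (up to relabelling): there is an injective graph
homomorphism from `G` to `H`. -/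
def IsSubgraphOf {n : ℕ} (G H : SimpleGraph (Fin n)) : Prop :=
  ∃ f : G →g H, Function.Injective f

lemma exists_eigvec_of_mem_spectrum {n : ℕ} [DecidableEq (Fin n)] (A : Matrix (Fin n) (Fin n) ℝ) (x : ℝ)
    (hx : x ∈ spectrum ℝ A) : ∃ v : Fin n → ℝ, v ≠ 0 ∧ A.mulVec v = x • v := by
  rw [← Matrix.spectrum_toLin', ← Module.End.hasEigenvalue_iff_mem_spectrum] at hx
  obtain ⟨v, hv⟩ := hx.exists_hasEigenvector
  exact ⟨v, hv.2, by simpa using hv.apply_eq_smul⟩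

lemma mem_spectrum_of_eigvec {n : ℕ} [DecidableEq (Fin n)] (A : Matrix (Fin n) (Fin n) ℝ) (x : ℝ)
    (v : Fin n → ℝ) (hv : v ≠ 0) (h : A.mulVec v = x • v) : x ∈ spectrum ℝ A := by
  rw [← Matrix.spectrum_toLin', ← Module.End.hasEigenvalue_iff_mem_spectrum]
  exact Module.End.hasEigenvalue_of_hasEigenvector
    (x := v) ⟨Module.End.mem_eigenspace_iff.2 (by simpa using h), hv⟩

/-- A positive supersolution bounds every eigenvalue of a nonnegative matrix. -/
lemma le_of_supersolution {n : ℕ} [DecidableEq (Fin n)] (A : Matrix (Fin n) (Fin n) ℝ) (hA : ∀ i j, 0 ≤ A i j)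
    (w : Fin n → ℝ) (hw : ∀ i, 0 < w i) (r : ℝ) (h : ∀ i, A.mulVec w i ≤ r * w i)
    (x : ℝ) (hx : x ∈ spectrum ℝ A) : x ≤ r := by
  obtain ⟨v, hv, he⟩ := exists_eigvec_of_mem_spectrum A x hx
  obtain ⟨k, hk⟩ := Function.ne_iff.1 hv
  have : Nonempty (Fin n) := ⟨k⟩
  obtain ⟨i, hi⟩ := Finite.exists_max (fun i => |v i| / w i)
  set M := |v i| / w i with hM
  have hMpos : 0 < M := lt_of_lt_of_le (div_pos (abs_pos.2 hk) (hw k)) (hi k)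
  have hle : ∀ j, |v j| ≤ M * w j := fun j => (div_le_iff₀ (hw j)).1 (hi j)
  have hvi : |v i| = M * w i := by rw [hM, div_mul_cancel₀ _ (hw i).ne']
  have h1 : x * v i = ∑ j, A i j * v j := by
    have := congrFun he i
    simpa [Matrix.mulVec, dotProduct] using this.symm
  have h2 : |x| * |v i| ≤ M * ∑ j, A i j * w j := by
    rw [← abs_mul, h1, Finset.mul_sum]
    refine (Finset.abs_sum_le_sum_abs _ _).trans (Finset.sum_le_sum fun j _ => ?_)
    rw [abs_mul, abs_of_nonneg (hA i j)]
    nlinarith [mul_le_mul_of_nonneg_left (hle j) (hA i j)]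
  have h3 : ∑ j, A i j * w j ≤ r * w i := by
    simpa [Matrix.mulVec, dotProduct] using h i
  rw [hvi] at h2
  have h4 : |x| * (M * w i) ≤ r * (M * w i) := by
    nlinarith [mul_le_mul_of_nonneg_left h3 hMpos.le]
  exact (le_abs_self x).trans (le_of_mul_le_mul_right h4 (mul_pos hMpos (hw i)))

lemma specRad_eq {n : ℕ} (G : SimpleGraph (Fin n)) [DecidableRel G.Adj] :
    specRad G = sSup (spectrum ℝ (G.adjMatrix ℝ)) := by
  unfold specRad
  congr!

/-- weights on the Gamma graph -/
def gw (m : ℕ) (j : ℕ) : ℝ := if j < 2 then 3 else if j < m + 2 then 2 else 1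

lemma sum_split (m : ℕ) (f : ℕ → ℝ) : ∑ j ∈ Finset.range (m + 5), f j =
    f 0 + f 1 + ∑ j ∈ Finset.range m, f (j + 2) + f (m+2) + f (m+3) + f (m+4) := by
  rw [Finset.sum_range_succ, Finset.sum_range_succ, Finset.sum_range_succ,
    Finset.sum_range_succ', Finset.sum_range_succ']
  simp only [zero_add, add_assoc, Nat.reduceAdd]
  ring

lemma gamma_le (m : ℕ) (hm : 4 ≤ m) : specRad (GammaGraph (m + 5) 3) ≤ (m : ℝ) + 2 := by
  classical
  rw [specRad_eq]
  refine Real.sSup_le (fun x hx => ?_) (by positivity)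
  have hmR : (4 : ℝ) ≤ m := by exact_mod_cast hm
  refine le_of_supersolution _ ?_ (fun i => gw m i) ?_ _ ?_ x hx
  · intro i j
    rw [SimpleGraph.adjMatrix_apply]
    split_ifs <;> norm_num
  · intro i
    simp only [gw]
    split_ifs <;> norm_num
  · intro i
    simp only [Matrix.mulVec, dotProduct, SimpleGraph.adjMatrix_apply]
    have key : ∀ j : Fin (m+5), (if (GammaGraph (m+5) 3).Adj i j then (1:ℝ) else 0) * gw m j
        = (fun k : ℕ => if (i:ℕ) < 2 ∨ k < 2 ∨ ((i:ℕ) < m+2 ∧ k < m+2) then gw m k else 0) j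
          - if i = j then (if (i:ℕ) < m+2 then gw m i else 0) else 0 := by
      intro j
      simp only [GammaGraph, SimpleGraph.fromRel_adj]
      by_cases hij : i = j
      · subst hij
        have : ((i:ℕ) < 2 ∨ (i:ℕ) < 2 ∨ ((i:ℕ) < m+2 ∧ (i:ℕ) < m+2)) ↔ (i:ℕ) < m + 2 := by omega
        simp only [this]
        simp
      · have : ((i:ℕ) < 2 ∨ (j:ℕ) < 2 ∨ ((i:ℕ) < m+2 ∧ (j:ℕ) < m+2)) ↔
          (i ≠ j ∧ (((i:ℕ) < 2 ∨ (j:ℕ) < 2 ∨ (i:ℕ) < m+5-3 ∧ (j:ℕ) < m+5-3) ∨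
          ((j:ℕ) < 2 ∨ (i:ℕ) < 2 ∨ (j:ℕ) < m+5-3 ∧ (i:ℕ) < m+5-3))) := by
          simp only [ne_eq, hij, not_false_eq_true, true_and]
          omega
        simp only [this, if_neg hij, sub_zero, ite_mul, one_mul, zero_mul]
    rw [Finset.sum_congr rfl fun j _ => key j, Finset.sum_sub_distrib,
      Fin.sum_univ_eq_sum_range (fun k : ℕ => if (i:ℕ) < 2 ∨ k < 2 ∨ ((i:ℕ) < m+2 ∧ k < m+2) then gw m k else 0) (m+5), Finset.sum_ite_eq, if_pos (Finset.mem_univ _), sum_split]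
    have hs : ∑ j ∈ Finset.range m, (if (i:ℕ) < 2 ∨ j + 2 < 2 ∨ ((i:ℕ) < m+2 ∧ j + 2 < m+2)
        then gw m (j+2) else 0) = m * (if (i:ℕ) < m+2 then 2 else 0) := by
      rw [Finset.sum_congr rfl (g := fun _ => if (i:ℕ) < m+2 then (2:ℝ) else 0)]
      · simp
      · intro j hj
        have := Finset.mem_range.1 hj
        have e : ((i:ℕ) < 2 ∨ j + 2 < 2 ∨ ((i:ℕ) < m+2 ∧ j + 2 < m+2)) ↔ (i:ℕ) < m+2 := by omega
        simp only [e]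
        simp [gw, this]
    rw [hs]
    rcases lt_or_ge (i:ℕ) 2 with h | h
    · have : (i:ℕ) < m + 2 := by omega
      simp [gw, h, this]
      linarith
    · have h' : ¬ (i:ℕ) < 2 := by omega
      rcases lt_or_ge (i:ℕ) (m+2) with h2 | h2
      · simp [gw, h', h2]
        linarith
      · have h2' : ¬ (i:ℕ) < m+2 := by omega
        simp [gw, h', h2']
        linarith

/-- eigenvector of the L graph -/
def lv (m : ℕ) (a b c : ℝ) (j : ℕ) : ℝ := if j = 0 then a else if j < m + 3 then b else c

lemma sum_split2 (m : ℕ) (f : ℕ → ℝ) : ∑ j ∈ Finset.range (m + 5), f j =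
    f 0 + ∑ j ∈ Finset.range (m+2), f (j + 1) + f (m+3) + f (m+4) := by
  rw [Finset.sum_range_succ, Finset.sum_range_succ,
    Finset.sum_range_succ']
  ring

lemma L_mem (m : ℕ) [DecidableRel (Lgraph (m+5) 2).Adj] (x a b c : ℝ) (ha : a ≠ 0)
    (e1 : (m+2) * b + 2 * c = x * a)
    (e2 : a + (m+1) * b = x * b) (e3 : a + c = x * c) :
    x ∈ spectrum ℝ ((Lgraph (m+5) 2).adjMatrix ℝ) := by
  refine mem_spectrum_of_eigvec _ x (fun i => lv m a b c i) ?_ ?_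
  · intro h
    have := congrFun h 0
    simp [lv] at this
    exact ha this
  · ext i
    simp only [Matrix.mulVec, dotProduct, SimpleGraph.adjMatrix_apply, Pi.smul_apply, smul_eq_mul]
    have key : ∀ j : Fin (m+5), (if (Lgraph (m+5) 2).Adj i j then (1:ℝ) else 0) * lv m a b c j
        = (fun k : ℕ => if (i:ℕ) = 0 ∨ k = 0 ∨ ((i:ℕ) < m+3 ∧ k < m+3) ∨ (m+3 ≤ (i:ℕ) ∧ m+3 ≤ k)
            then lv m a b c k else 0) j
          - if i = j then lv m a b c i else 0 := by
      intro j
      simp only [Lgraph, SimpleGraph.fromRel_adj]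
      by_cases hij : i = j
      · subst hij
        have : ((i:ℕ) = 0 ∨ (i:ℕ) = 0 ∨ ((i:ℕ) < m+3 ∧ (i:ℕ) < m+3) ∨
          (m+3 ≤ (i:ℕ) ∧ m+3 ≤ (i:ℕ))) := by omega
        simp only [if_pos this]
        simp
      · have : ((i:ℕ) = 0 ∨ (j:ℕ) = 0 ∨ ((i:ℕ) < m+3 ∧ (j:ℕ) < m+3) ∨
            (m+3 ≤ (i:ℕ) ∧ m+3 ≤ (j:ℕ))) ↔
          (i ≠ j ∧ (((i:ℕ) = 0 ∨ (j:ℕ) = 0 ∨ (i:ℕ) < m+5-2 ∧ (j:ℕ) < m+5-2 ∨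
              m+5-2 ≤ (i:ℕ) ∧ m+5-2 ≤ (j:ℕ)) ∨
          ((j:ℕ) = 0 ∨ (i:ℕ) = 0 ∨ (j:ℕ) < m+5-2 ∧ (i:ℕ) < m+5-2 ∨
              m+5-2 ≤ (j:ℕ) ∧ m+5-2 ≤ (i:ℕ)))) := by
          simp only [ne_eq, hij, not_false_eq_true, true_and]
          omega
        simp only [this, if_neg hij, sub_zero, ite_mul, one_mul, zero_mul]
    rw [Finset.sum_congr rfl fun j _ => key j, Finset.sum_sub_distrib,
      Fin.sum_univ_eq_sum_range (fun k : ℕ => if (i:ℕ) = 0 ∨ k = 0 ∨ ((i:ℕ) < m+3 ∧ k < m+3) ∨ (m+3 ≤ (i:ℕ) ∧ m+3 ≤ k)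
        then lv m a b c k else 0) (m+5), Finset.sum_ite_eq, if_pos (Finset.mem_univ _), sum_split2]
    have hs : ∑ j ∈ Finset.range (m+2), (if (i:ℕ) = 0 ∨ j + 1 = 0 ∨ ((i:ℕ) < m+3 ∧ j + 1 < m+3) ∨
        (m+3 ≤ (i:ℕ) ∧ m+3 ≤ j + 1)
        then lv m a b c (j+1) else 0) = (m+2) * (if (i:ℕ) < m+3 then b else 0) := by
      rw [Finset.sum_congr rfl (g := fun _ => if (i:ℕ) < m+3 then b else 0)]
      · simp
      · intro j hj
        have := Finset.mem_range.1 hj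
        have e : ((i:ℕ) = 0 ∨ j + 1 = 0 ∨ ((i:ℕ) < m+3 ∧ j + 1 < m+3) ∨
          (m+3 ≤ (i:ℕ) ∧ m+3 ≤ j + 1)) ↔ (i:ℕ) < m+3 := by omega
        have e' : j + 1 < m + 3 := by omega
        simp only [e]
        simp [lv, this]
    rw [hs]
    rcases Nat.eq_zero_or_pos (i:ℕ) with h | h
    · simp [lv, h]
      linarith
    · have h' : ¬ (i:ℕ) = 0 := by omega
      rcases lt_or_ge (i:ℕ) (m+3) with h2 | h2
      · have h3 : ¬ (m + 3 ≤ (i:ℕ)) := by omega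
        simp only [lv, h', h2, h3]
        simp
        linarith
      · have h2' : ¬ (i:ℕ) < m+3 := by omega
        simp only [lv, h', h2, h2']
        simp
        linarith

lemma lt_L (m : ℕ) (hm : 4 ≤ m) : (m : ℝ) + 2 < specRad (Lgraph (m + 5) 2) := by
  classical
  have hmR : (4 : ℝ) ≤ m := by exact_mod_cast hm
  rw [specRad_eq]
  let f : ℝ → ℝ := fun x => x * (x - m - 1) * (x - 1) - (m+2) * (x-1) - 2 * (x - m - 1)
  have hf : ContinuousOn f (Set.Icc ((m:ℝ)+2) (m+4)) := by fun_prop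
  have h1 : f (m+2) < 0 := by simp only [f]; ring_nf; norm_num
  have h2 : 0 < f (m+4) := by simp only [f]; nlinarith
  obtain ⟨x, hx, hx0⟩ := intermediate_value_Ioo (by linarith) hf (show (0:ℝ) ∈ Set.Ioo _ _ from ⟨h1, h2⟩)
  simp only [f] at hx0
  have hmem := L_mem m x ((x - m - 1) * (x - 1)) (x - 1) (x - m - 1)
    (mul_ne_zero (by linarith [hx.1]) (by linarith [hx.1])) (by linarith) (by ring) (by ring)
  refine lt_of_lt_of_le hx.1 (le_csSup ?_ hmem)
  rw [← Matrix.spectrum_toLin']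
  exact (Module.End.finite_spectrum _).bddAbove

/-- Lemma 3.6: `ρ(L_{n,2}) > ρ(Γ_{n,3})` for `n ≥ 9`. -/
theorem specRad_Gamma3_lt (n : ℕ) (hn : 9 ≤ n) :
    specRad (GammaGraph n 3) < specRad (Lgraph n 2) := by
  obtain ⟨m, rfl⟩ := Nat.exists_eq_add_of_le' (show 5 ≤ n by omega)
  exact (gamma_le m (by omega)).trans_lt (lt_L m (by omega))
end

section
/- For every integer n ≥ 10, q(L_{n,2}) > q(Γ_{n,3}), where q denotes the signless Laplacian spectral radius. -/
open SimpleGraph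

open Matrix in
/-- Existence of an eigenvector for every element of the spectrum, and conversely. -/
lemma mem_spectrum_iff_mulVec {V : Type} [Fintype V] [DecidableEq V] (M : Matrix V V ℝ) (μ : ℝ) :
    μ ∈ spectrum ℝ M ↔ ∃ x : V → ℝ, x ≠ 0 ∧ M *ᵥ x = μ • x := by
  rw [spectrum.mem_iff, Matrix.isUnit_iff_isUnit_det, isUnit_iff_ne_zero, not_not,
    ← Matrix.exists_mulVec_eq_zero_iff]
  refine exists_congr fun x => and_congr_right fun _ => ?_
  rw [Matrix.sub_mulVec, sub_eq_zero, Algebra.algebraMap_eq_smul_one, Matrix.smul_mulVec,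
    Matrix.one_mulVec]
  exact eq_comm

open Classical in
lemma qSpecRad_eq {n : ℕ} (G : SimpleGraph (Fin n)) :
    qSpecRad G
      = sSup (spectrum ℝ (Matrix.diagonal (fun v => (degCount G v : ℝ)) + G.adjMatrix ℝ)) := by
  unfold qSpecRad
  congr!

open Matrix in
open Classical in
lemma q_mulVec {n : ℕ} (G : SimpleGraph (Fin n)) (x : Fin n → ℝ) (i : Fin n) :
    ((Matrix.diagonal (fun v => (degCount G v : ℝ)) + G.adjMatrix ℝ) *ᵥ x) i
      = ∑ j : Fin n, if G.Adj i j then x i + x j else 0 := by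
  rw [Matrix.add_mulVec, Pi.add_apply, Matrix.mulVec_diagonal]
  have h1 : (degCount G i : ℝ) = ∑ j : Fin n, if G.Adj i j then (1 : ℝ) else 0 := by
    rw [Finset.sum_boole, degCount, Nat.card_eq_fintype_card, Fintype.card_subtype]
    simp
  rw [h1, Finset.sum_mul, Matrix.mulVec, dotProduct, ← Finset.sum_add_distrib]
  refine Finset.sum_congr rfl fun j _ => ?_
  rw [SimpleGraph.adjMatrix_apply]
  split_ifs <;> simp

open Classical in
lemma qSpecRad_le_of {n : ℕ} (G : SimpleGraph (Fin n)) (v : Fin n → ℝ) (c : ℝ) (hc : 0 ≤ c)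
    (hv : ∀ i, 0 < v i)
    (h : ∀ i, (∑ j : Fin n, if G.Adj i j then v i + v j else 0) ≤ c * v i) :
    qSpecRad G ≤ c := by
  rw [qSpecRad_eq]
  refine Real.sSup_le ?_ hc
  intro μ hμ
  rw [mem_spectrum_iff_mulVec] at hμ
  obtain ⟨x, hx, hxe⟩ := hμ
  obtain ⟨k, hk⟩ := Function.ne_iff.mp hx
  obtain ⟨i, -, hi⟩ := Finset.exists_max_image Finset.univ (fun i => |x i| / v i) ⟨k, Finset.mem_univ k⟩
  set M := |x i| / v i with hM
  have hMk : 0 < M := lt_of_lt_of_le (div_pos (abs_pos.mpr hk) (hv k)) (hi k (Finset.mem_univ k))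
  have hb : ∀ j, |x j| ≤ M * v j := fun j => (div_le_iff₀ (hv j)).mp (hi j (Finset.mem_univ j))
  have hxi : |x i| = M * v i := by rw [hM, div_mul_cancel₀ _ (hv i).ne']
  have he := congrFun hxe i
  rw [q_mulVec, Pi.smul_apply, smul_eq_mul] at he
  have h2 : |μ| * |x i| ≤ M * (c * v i) := by
    rw [← abs_mul, ← he]
    refine (Finset.abs_sum_le_sum_abs _ _).trans ?_
    refine le_trans ?_ (mul_le_mul_of_nonneg_left (h i) hMk.le)
    rw [Finset.mul_sum]
    refine Finset.sum_le_sum fun j _ => ?_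
    split_ifs
    · have := abs_add_le (x i) (x j)
      have := hb i
      have := hb j
      linarith
    · simp
  have h3 : |μ| * (M * v i) ≤ c * (M * v i) := by rw [hxi] at h2; linarith
  exact (le_abs_self μ).trans (le_of_mul_le_mul_right h3 (mul_pos hMk (hv i)))

open Classical in
lemma le_qSpecRad_of {n : ℕ} (G : SimpleGraph (Fin n)) (x : Fin n → ℝ) (μ : ℝ) (hx : x ≠ 0)
    (h : ∀ i, (∑ j : Fin n, if G.Adj i j then x i + x j else 0) = μ * x i) :
    μ ≤ qSpecRad G := by
  rw [qSpecRad_eq]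
  refine le_csSup (Set.Finite.bddAbove (Matrix.finite_real_spectrum)) ?_
  rw [mem_spectrum_iff_mulVec]
  refine ⟨x, hx, ?_⟩
  ext i
  rw [q_mulVec, h i, Pi.smul_apply, smul_eq_mul]

open Classical in
/-- Turn a neighbourhood sum in a `fromRel` graph into a sum over a range. -/
lemma fromRel_sum {n : ℕ} (r : ℕ → ℕ → Prop) (hr : ∀ a b, r a b → r b a) (g : ℕ → ℝ) (i : Fin n) :
    (∑ j : Fin n, if (SimpleGraph.fromRel (fun u v : Fin n => r u.val v.val)).Adj i j
        then g i.val + g j.val else 0)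
      = (∑ j ∈ Finset.range n, if r i.val j then g i.val + g j else 0)
        - (if r i.val i.val then 2 * g i.val else 0) := by
  rw [← Fin.sum_univ_eq_sum_range (fun j => if r i.val j then g i.val + g j else 0) n, eq_sub_iff_add_eq]
  have : (if r i.val i.val then 2 * g i.val else 0)
      = ∑ j : Fin n, if j = i then (if r i.val i.val then 2 * g i.val else 0) else 0 := by
    simp
  rw [this, ← Finset.sum_add_distrib]
  refine Finset.sum_congr rfl fun j _ => ?_
  by_cases hij : j = i
  · subst hij
    simp [two_mul]
  · have : (r i.val j.val ∨ r j.val i.val) ↔ r i.val j.val := ⟨fun h => h.elim id (hr _ _), Or.inl⟩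
    simp [SimpleGraph.fromRel_adj, hij, this, Ne.symm hij]

lemma gamma_le_s16 (n : ℕ) (hn : 10 ≤ n) : qSpecRad (GammaGraph n 3) ≤ 2 * n - 6 := by
  classical
  obtain ⟨m, rfl⟩ : ∃ m, n = (m + 2) + 3 := ⟨n - 5, by omega⟩
  have hm : (5 : ℝ) ≤ m := by exact_mod_cast (by omega : 5 ≤ m)
  set g : ℕ → ℝ := fun k => if k < 2 then 1 else if k < m + 2 then 1 / 2 else 1 / 6 with hg
  have e0 : g 0 = 1 := by simp [hg]
  have e1 : g 1 = 1 := by simp [hg]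
  have eb : ∀ k, k < m → g (k + 1 + 1) = 1 / 2 := fun k hk => by simp [hg, hk]
  have ec : ∀ k, g (m + 2 + k) = 1 / 6 := fun k => by
    simp only [hg]
    rw [if_neg (by omega), if_neg (by omega)]
  refine qSpecRad_le_of _ (fun i => g i.val) _ (by push_cast; linarith) ?_ ?_
  · intro i
    simp only [hg]
    split_ifs <;> norm_num
  intro i
  unfold GammaGraph
  have hs := fromRel_sum (n := m + 2 + 3)
    (fun a b => a < 2 ∨ b < 2 ∨ (a < m + 2 + 3 - 3 ∧ b < m + 2 + 3 - 3)) (by intro a b; tauto) g i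
  refine (le_of_eq ?_).trans ((le_of_eq hs).trans ?_)
  · refine Finset.sum_congr rfl fun j _ => ?_
    congr!
  obtain ⟨i, hi⟩ := i
  simp only [Nat.add_sub_cancel]
  rw [Finset.sum_range_succ, Finset.sum_range_succ, Finset.sum_range_succ, Finset.sum_range_succ',
    Finset.sum_range_succ']
  have hc0 := ec 0
  have hc1 := ec 1
  have hc2 := ec 2
  simp only [zero_add, e0, e1, add_zero] at hc0 ⊢
  rw [show m + 2 + 1 + 1 = m + 2 + 2 from rfl, hc0, hc1, hc2]
  by_cases h2 : i < 2
  · have hgi : g i = 1 := by simp only [hg]; rw [if_pos h2]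
    rw [Finset.sum_congr rfl (g := fun _ => (3 : ℝ) / 2)]
    · simp [h2, hgi]
      linarith
    · intro k hk
      rw [eb k (Finset.mem_range.mp hk), hgi]
      simp [h2]; norm_num
  by_cases h3 : i < m + 2
  · have hgi : g i = 1 / 2 := by simp only [hg]; rw [if_neg h2]; simp only [h3, if_true, if_false]
    rw [Finset.sum_congr rfl (g := fun _ => (1 : ℝ))]
    · simp [h2, h3, hgi]
      linarith
    · intro k hk
      rw [eb k (Finset.mem_range.mp hk), hgi]
      simp [h3, Finset.mem_range.mp hk]; norm_num
  · have hgi : g i = 1 / 6 := by simp only [hg]; rw [if_neg h2]; simp only [h3, if_true, if_false]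
    rw [Finset.sum_congr rfl (g := fun _ => (0 : ℝ))]
    · simp [h2, h3, hgi]
      linarith
    · intro k hk
      simp [h2, h3]

lemma exists_root (n : ℝ) (hn : 10 ≤ n) : ∃ q : ℝ, 2 * n - 6 < q ∧
    (q - (n - 1)) * (q - 2 * n + 7) * (q - 3) - (n - 3) * (q - 3) - 2 * (q - 2 * n + 7) = 0 := by
  have hc : ContinuousOn (fun q : ℝ => (q - (n - 1)) * (q - 2 * n + 7) * (q - 3) - (n - 3) * (q - 3)
    - 2 * (q - 2 * n + 7)) (Set.Icc (2 * n - 6) (2 * n)) := by fun_prop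
  have := intermediate_value_Ioo (by linarith) hc
  obtain ⟨q, hq, h⟩ := this (show (0 : ℝ) ∈ _ by constructor <;> nlinarith)
  exact ⟨q, hq.1, h⟩

lemma lt_L_s16 (n : ℕ) (hn : 10 ≤ n) : (2 * n - 6 : ℝ) < qSpecRad (Lgraph n 2) := by
  classical
  obtain ⟨q, hq, hroot⟩ := exists_root n (by exact_mod_cast hn)
  refine lt_of_lt_of_le hq ?_
  obtain ⟨m, rfl⟩ : ∃ m, n = (m + 1) + 2 := ⟨n - 3, by omega⟩
  have hm : (7 : ℝ) ≤ m := by exact_mod_cast (by omega : 7 ≤ m)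
  push_cast at hq hroot
  set A : ℝ := (q - 2 * (m + 1 + 2) + 7) * (q - 3) with hA
  set B : ℝ := q - 3 with hB
  set C : ℝ := q - 2 * (m + 1 + 2) + 7 with hC
  set g : ℕ → ℝ := fun k => if k = 0 then A else if k < m + 1 then B else C with hg
  have e0 : g 0 = A := by simp [hg]
  have eb : ∀ k, k < m → g (k + 1) = B := fun k hk => by simp [hg, hk]
  have ec : ∀ k, g (m + 1 + k) = C := fun k => by
    simp only [hg]
    rw [if_neg (by omega), if_neg (by omega)]
  refine le_qSpecRad_of _ (fun i => g i.val) _ ?_ ?_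
  · intro h
    have := congrFun h ⟨0, by omega⟩
    simp only [e0, Pi.zero_apply] at this
    have : 0 < A := mul_pos (by linarith) (by linarith)
    linarith
  intro i
  unfold Lgraph
  have hs := fromRel_sum (n := m + 1 + 2)
    (fun a b => a = 0 ∨ b = 0 ∨ (a < m + 1 + 2 - 2 ∧ b < m + 1 + 2 - 2)
      ∨ (m + 1 + 2 - 2 ≤ a ∧ m + 1 + 2 - 2 ≤ b)) (by intro a b; tauto) g i
  refine Eq.trans ?_ (hs.trans ?_)
  · refine Finset.sum_congr rfl fun j _ => ?_
    congr!
  obtain ⟨i, hi⟩ := i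
  simp only [Nat.add_sub_cancel]
  rw [Finset.sum_range_succ, Finset.sum_range_succ, Finset.sum_range_succ']
  have hc0 := ec 0
  have hc1 := ec 1
  simp only [e0, add_zero] at hc0 ⊢
  rw [hc0, hc1]
  by_cases h2 : i = 0
  · subst h2
    rw [Finset.sum_congr rfl (g := fun _ => A + B)]
    · simp [e0]
      linear_combination -hroot
    · intro k hk
      rw [eb k (Finset.mem_range.mp hk), e0]
      simp
  by_cases h3 : i < m + 1
  · have hgi : g i = B := by simp only [hg]; rw [if_neg h2]; simp only [h3, if_true, if_false]
    rw [Finset.sum_congr rfl (g := fun _ => B + B)]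
    · simp [h2, h3, hgi, not_le.mpr h3]
      linear_combination hA
    · intro k hk
      rw [eb k (Finset.mem_range.mp hk), hgi]
      simp [h3, Finset.mem_range.mp hk]
  · have hgi : g i = C := by simp only [hg]; rw [if_neg h2]; simp only [h3, if_true, if_false]
    rw [Finset.sum_congr rfl (g := fun _ => (0 : ℝ))]
    · simp [h2, h3, hgi, not_lt.mp h3]
      linear_combination hA
    · intro k hk
      have := Finset.mem_range.mp hk
      simp [h2, h3, this]

/-- Lemma 3.6: `q(L_{n,2}) > q(Γ_{n,3})` for `n ≥ 10`. -/
theorem qSpecRad_Gamma3_lt (n : ℕ) (hn : 10 ≤ n) :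
    qSpecRad (GammaGraph n 3) < qSpecRad (Lgraph n 2) := by
  exact (gamma_le_s16 n hn).trans_lt (lt_L_s16 n hn)
end
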